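/- Let F : ℝ^m × ℝ^p → ℝ be a smooth (infinitely differentiable) function and let (u*, d*) ∈ ℝ^m × ℝ^p. Suppose that (i) the derivative at u* of the partial map u ↦ F(u, d*) vanishes and its second derivative at u* is a positive definite quadratic form on ℝ^m, and (ii) the derivative at d* of the partial map d ↦ F(u*, d) vanishes and its second derivative at d* is a negative definite quadratic form on ℝ^p. Then there exist open sets U ⊆ ℝ^m and D ⊆ ℝ^p with u* ∈ U and d* ∈ D such that (u*, d*) is a saddle point of F restricted to U × D. -/

import Mathlib

/-- A bilinear form on a finite-dimensional space that is positive on the diagonal away from `0`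
is coercive. -/
theorem ContinuousLinearMap.exists_pos_mul_sq_norm_le_of_pos {E : Type*} [NormedAddCommGroup E]
    [NormedSpace ℝ E] [FiniteDimensional ℝ E] (B : E →L[ℝ] E →L[ℝ] ℝ)
    (hB : ∀ v, v ≠ 0 → 0 < B v v) : ∃ c > 0, ∀ v, c * ‖v‖ ^ 2 ≤ B v v := by
  rcases subsingleton_or_nontrivial E with hE | hE
  · exact ⟨1, one_pos, fun v => by simp [Subsingleton.elim v 0]⟩
  obtain ⟨w, hw, hmin⟩ := (isCompact_sphere (0 : E) 1).exists_isMinOn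
    (NormedSpace.sphere_nonempty.2 zero_le_one)
    (f := fun v => B v v) (by fun_prop)
  have hw0 : w ≠ 0 := ne_zero_of_mem_unit_sphere ⟨w, hw⟩
  refine ⟨B w w, hB w hw0, fun v => ?_⟩
  rcases eq_or_ne v 0 with rfl | hv
  · simp
  have hv' : ‖v‖ ≠ 0 := norm_ne_zero_iff.2 hv
  have hle : B w w ≤ B (‖v‖⁻¹ • v) (‖v‖⁻¹ • v) :=
    hmin (show ‖v‖⁻¹ • v ∈ Metric.sphere (0 : E) 1 by simp [norm_smul, hv'])
  calc B w w * ‖v‖ ^ 2 ≤ B (‖v‖⁻¹ • v) (‖v‖⁻¹ • v) * ‖v‖ ^ 2 := by gcongr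
    _ = B v v := by
      simp only [map_smul, smul_apply, smul_eq_mul]
      field_simp

open Topology in
/-- The second derivative test: a critical point with positive definite second derivative is a
local minimum. -/
theorem isLocalMin_of_fderiv_eq_zero_of_iteratedFDeriv_two_pos {E : Type*} [NormedAddCommGroup E]
    [NormedSpace ℝ E] [FiniteDimensional ℝ E] {f : E → ℝ} {a : E} (hf : ContDiffAt ℝ 2 f a)
    (hfa : fderiv ℝ f a = 0) (hpos : ∀ v, v ≠ 0 → 0 < iteratedFDeriv ℝ 2 f a ![v, v]) :
    IsLocalMin f a := by
  obtain ⟨c, hc, hcoer⟩ :=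
    (fderiv ℝ (fderiv ℝ f) a).exists_pos_mul_sq_norm_le_of_pos fun v hv => by
      simpa [iteratedFDeriv_two_apply] using hpos v hv
  have hdiff : ∀ᶠ x in 𝓝 a, DifferentiableAt ℝ f x :=
    (hf.eventually (by simp)).mono fun x hx => hx.differentiableAt (by simp)
  have hder : HasFDerivAt (fderiv ℝ f) (fderiv ℝ (fderiv ℝ f) a) a :=
    ((hf.fderiv_right (m := 1) (by norm_num)).differentiableAt (by simp)).hasFDerivAt
  have hradial : ∀ᶠ x in 𝓝 a, 0 ≤ fderiv ℝ f x (x - a) := by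
    filter_upwards [hder.isLittleO.bound hc] with x hx
    rw [hfa, sub_zero] at hx
    have hbound := (fderiv ℝ f x - fderiv ℝ (fderiv ℝ f) a (x - a)).le_of_opNorm_le hx (x - a)
    rw [Real.norm_eq_abs, sub_apply] at hbound
    nlinarith [neg_le_of_abs_le hbound, hcoer (x - a)]
  obtain ⟨r, hr, hball⟩ := Metric.eventually_nhds_iff_ball.1 (hdiff.and hradial)
  filter_upwards [Metric.ball_mem_nhds a hr] with y hy
  obtain ⟨z, hz, hfz⟩ := domain_mvt
    (fun x hx => (hball x hx).1.hasFDerivAt.hasFDerivWithinAt)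
    (convex_ball a r) (Metric.mem_ball_self hr) hy
  have hzr : z ∈ Metric.ball a r :=
    (convex_ball a r).segment_subset (Metric.mem_ball_self hr) hy hz
  rw [segment_eq_image'] at hz
  obtain ⟨t, ht, rfl⟩ := hz
  rw [← sub_nonneg, hfz]
  rcases ht.1.eq_or_lt with rfl | ht0
  · simp [hfa]
  · have hnonneg := (hball _ hzr).2
    rw [add_sub_cancel_left, map_smul, smul_eq_mul] at hnonneg
    exact nonneg_of_mul_nonneg_right hnonneg ht0

/-- Sufficient second-order condition for a (local) saddle point. -/
theorem stmt_4 {m p : ℕ}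
    (F : (EuclideanSpace ℝ (Fin m)) × (EuclideanSpace ℝ (Fin p)) → ℝ)
    (hF : ContDiff ℝ (⊤ : ℕ∞) F)
    (ustar : EuclideanSpace ℝ (Fin m)) (dstar : EuclideanSpace ℝ (Fin p))
    (hgu : fderiv ℝ (fun u => F (u, dstar)) ustar = 0)
    (hposdef : ∀ v : EuclideanSpace ℝ (Fin m), v ≠ 0 →
      0 < iteratedFDeriv ℝ 2 (fun u => F (u, dstar)) ustar ![v, v])
    (hgd : fderiv ℝ (fun d => F (ustar, d)) dstar = 0)
    (hnegdef : ∀ w : EuclideanSpace ℝ (Fin p), w ≠ 0 →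
      iteratedFDeriv ℝ 2 (fun d => F (ustar, d)) dstar ![w, w] < 0) :
    ∃ U : Set (EuclideanSpace ℝ (Fin m)), ∃ D : Set (EuclideanSpace ℝ (Fin p)),
      IsOpen U ∧ IsOpen D ∧ ustar ∈ U ∧ dstar ∈ D ∧
      ∀ u ∈ U, ∀ d ∈ D, F (ustar, d) ≤ F (ustar, dstar) ∧ F (ustar, dstar) ≤ F (u, dstar) := by
  have hu : ContDiff ℝ (⊤ : ℕ∞) fun u => F (u, dstar) := hF.comp (by fun_prop)
  have hd : ContDiff ℝ (⊤ : ℕ∞) fun d => F (ustar, d) := hF.comp (by fun_prop)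
  have htwo : (2 : WithTop ℕ∞) ≤ ((⊤ : ℕ∞) : WithTop ℕ∞) :=
    WithTop.coe_le_coe.2 (le_top : (2 : ℕ∞) ≤ ⊤)
  have hmin := isLocalMin_of_fderiv_eq_zero_of_iteratedFDeriv_two_pos
    (hu.contDiffAt.of_le htwo) hgu hposdef
  have hmax := isLocalMin_of_fderiv_eq_zero_of_iteratedFDeriv_two_pos
    (f := -fun d => F (ustar, d)) (hd.neg.contDiffAt.of_le htwo) (by rw [fderiv_neg, hgd, neg_zero])
    fun w hw => by simpa [iteratedFDeriv_neg] using hnegdef w hw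
  obtain ⟨U, hU, hUo, huU⟩ := eventually_nhds_iff.1 hmin
  obtain ⟨D, hD, hDo, hdD⟩ := eventually_nhds_iff.1 hmax
  exact ⟨U, D, hUo, hDo, huU, hdD, fun u hu d hd => ⟨neg_le_neg_iff.1 (hD d hd), hU u hu⟩⟩
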